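/- For every dimension d ≥ 1 there exists a constant C > 0 depending only on d with the following property: for all 0 < ε ≤ δ, every x₀ ∈ ℝ^d, and every continuously differentiable function z on a neighborhood of the closed cube I_δ := x₀ + δ·[−1/2,1/2]^d with ∫_{I_δ} z dx = 0, one has ∫_{I_δ ∖ I_{δ−ε}} z² dx ≤ C ε δ ∫_{I_δ} |∇z|² dx, where I_{δ−ε} := x₀ + (δ−ε)·[−1/2,1/2]^d is the concentric cube of side δ−ε. -/

import Mathlib

open MeasureTheory

noncomputable section

/-- The cube `x₀ + r·[-1/2,1/2]^d`. -/
def cube (d : ℕ) (x₀ : Fin d → ℝ) (r : ℝ) : Set (Fin d → ℝ) :=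
  {x | ∀ i, |x i - x₀ i| ≤ r / 2}

/-- The gradient of `v : ℝ^d → ℝ`. -/
def grad (d : ℕ) (v : (Fin d → ℝ) → ℝ) (x : Fin d → ℝ) : Fin d → ℝ :=
  fun i => fderiv ℝ v x (Pi.single i 1)

/-!
Let `Q` be the cube of side `δ`. Since `z` has mean zero, Jensen's inequality gives
`|Q| ‖z x‖² ≤ ∫_Q ‖z x - z y‖² dy`. Pass from `x` to `y` by replacing one coordinate at a time,
*beginning with the `i`-th*. By Cauchy–Schwarz on a segment, the step in direction `k` costs at most
`δ ∫ ‖∂ₖ z‖²` along a full chord of `Q`, and this chord never involves `x i`: either `x i` has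
already been replaced, or `k = i`. Exchanging the replaced coordinates of `x` and `y` preserves the
measure, so a weight `φ (x i)` factors out of the double integral. For `φ` the indicator of the two
slabs of total width `ε` next to the faces orthogonal to the `i`-th axis, this is a trace estimate
with constant `d ε δ`, and `d` such pairs of slabs cover the strip. A smooth cutoff reduces
to globally defined `z`.
-/

open Finset Function Topology
open scoped ENNReal Manifold

variable {ι α E : Type*} [NormedAddCommGroup E]

lemma sq_lintegral_le [MeasurableSpace α] (μ : Measure α) {f : α → ℝ≥0∞} (hf : AEMeasurable f μ) :
    (∫⁻ x, f x ∂μ) ^ 2 ≤ μ Set.univ * ∫⁻ x, f x ^ 2 ∂μ := by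
  have holder := ENNReal.lintegral_mul_le_Lp_mul_Lq μ .two_two hf aemeasurable_const (g := 1)
  simp only [Pi.mul_apply, Pi.one_apply, mul_one, lintegral_const, one_mul, one_pow,
    ENNReal.rpow_two] at holder
  calc (∫⁻ x, f x ∂μ) ^ 2
      ≤ ((∫⁻ x, f x ^ 2 ∂μ) ^ (1 / 2 : ℝ) * μ Set.univ ^ (1 / 2 : ℝ)) ^ 2 := by gcongr
    _ = μ Set.univ * ∫⁻ x, f x ^ 2 ∂μ := by
      simp only [mul_pow, ← ENNReal.rpow_mul_natCast]
      norm_num [mul_comm]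

lemma enorm_sum_sq_le_card_mul_sum (s : Finset ι) (f : ι → E) :
    ‖∑ k ∈ s, f k‖ₑ ^ 2 ≤ #s * ∑ k ∈ s, ‖f k‖ₑ ^ 2 := by
  calc ‖∑ k ∈ s, f k‖ₑ ^ 2 ≤ (∑ k ∈ s, ‖f k‖ₑ) ^ 2 := by gcongr; exact enorm_sum_le s f
    _ ≤ #s * ∑ k ∈ s, ‖f k‖ₑ ^ 2 := by
      simp only [enorm_eq_nnnorm]
      exact_mod_cast sq_sum_le_card_mul_sum_sq (s := s) (f := fun k => ‖f k‖₊)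

lemma measure_univ_mul_enorm_sq_le_lintegral [MeasurableSpace α] [NormedSpace ℝ E]
    [CompleteSpace E] {μ : Measure α} [IsFiniteMeasure μ] {f : α → E} (hf : Integrable f μ)
    (hf₀ : ∫ x, f x ∂μ = 0) (c : E) :
    μ Set.univ * ‖c‖ₑ ^ 2 ≤ ∫⁻ x, ‖c - f x‖ₑ ^ 2 ∂μ := by
  rcases eq_or_ne (μ Set.univ) 0 with hμ | hμ
  · simp [hμ]
  have mean : ∫ x, (c - f x) ∂μ = μ.real Set.univ • c := by
    rw [integral_sub (integrable_const c) hf, hf₀, sub_zero, integral_const]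
  have jensen : (μ Set.univ * ‖c‖ₑ) ^ 2 ≤ μ Set.univ * ∫⁻ x, ‖c - f x‖ₑ ^ 2 ∂μ :=
    calc (μ Set.univ * ‖c‖ₑ) ^ 2 = ‖∫ x, (c - f x) ∂μ‖ₑ ^ 2 := by
          rw [mean, enorm_smul, Real.enorm_eq_ofReal measureReal_nonneg,
            ofReal_measureReal]
      _ ≤ (∫⁻ x, ‖c - f x‖ₑ ∂μ) ^ 2 := by gcongr; exact enorm_integral_le_lintegral_enorm _
      _ ≤ _ := sq_lintegral_le μ ((integrable_const c).sub hf).aestronglyMeasurable.enorm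
  rw [mul_pow, sq (μ Set.univ), mul_assoc] at jensen
  exact (ENNReal.mul_le_mul_iff_right hμ (measure_ne_top μ _)).1 jensen

lemma measure_univ_mul_lintegral_mul_enorm_sq_le [MeasurableSpace α] [NormedSpace ℝ E]
    [CompleteSpace E] {μ : Measure α} [IsFiniteMeasure μ] {w : α → ℝ≥0∞} (hw : AEMeasurable w μ)
    {f : α → E} (hf : Integrable f μ) (hf₀ : ∫ x, f x ∂μ = 0) :
    μ Set.univ * ∫⁻ x, w x * ‖f x‖ₑ ^ 2 ∂μ ≤
      ∫⁻ p, w p.1 * ‖f p.1 - f p.2‖ₑ ^ 2 ∂μ.prod μ := by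
  have meas_integrand :
      AEMeasurable (fun p : α × α => w p.1 * ‖f p.1 - f p.2‖ₑ ^ 2) (μ.prod μ) :=
    hw.comp_fst.mul ((hf.1.comp_fst.sub hf.1.comp_snd).enorm.pow_const 2)
  rw [lintegral_prod _ meas_integrand,
    ← lintegral_const_mul' _ _ (measure_ne_top μ _)]
  refine lintegral_mono fun x => ?_
  calc μ Set.univ * (w x * ‖f x‖ₑ ^ 2) = w x * (μ Set.univ * ‖f x‖ₑ ^ 2) := mul_left_comm _ _ _
    _ ≤ w x * ∫⁻ y, ‖f x - f y‖ₑ ^ 2 ∂μ := by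
      grw [measure_univ_mul_enorm_sq_le_lintegral hf hf₀ (f x)]
    _ ≤ ∫⁻ y, w x * ‖f x - f y‖ₑ ^ 2 ∂μ := lintegral_const_mul_le _ _

lemma ofReal_integral_norm_sq [MeasurableSpace α] {μ : Measure α} {f : α → E}
    (hf : Integrable (fun x => ‖f x‖ ^ 2) μ) :
    ENNReal.ofReal (∫ x, ‖f x‖ ^ 2 ∂μ) = ∫⁻ x, ‖f x‖ₑ ^ 2 ∂μ := by
  simpa only [norm_pow, norm_norm, enorm_pow, enorm_norm] using
    ofReal_integral_norm_eq_lintegral_enorm hf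

lemma enorm_sub_sq_le_lintegral_deriv [NormedSpace ℝ E] {f : ℝ → E} (hf : ContDiff ℝ 1 f)
    {a b s t : ℝ} (hs : s ∈ Set.Icc a b) (ht : t ∈ Set.Icc a b) :
    ‖f s - f t‖ₑ ^ 2 ≤ ENNReal.ofReal (b - a) * ∫⁻ r in Set.Icc a b, ‖deriv f r‖ₑ ^ 2 := by
  wlog hts : t ≤ s generalizing s t
  · rw [enorm_sub_rev]
    exact this ht hs (le_of_not_ge hts)
  calc ‖f s - f t‖ₑ ^ 2 ≤ (∫⁻ r in Set.Icc t s, ‖deriv f r‖ₑ) ^ 2 := by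
        gcongr
        exact enorm_sub_le_lintegral_deriv_of_contDiffOn_Icc hf.contDiffOn hts
    _ ≤ (∫⁻ r in Set.Icc a b, ‖deriv f r‖ₑ) ^ 2 := by
        gcongr
        exacts [ht.1, hs.2]
    _ ≤ ENNReal.ofReal (b - a) * ∫⁻ r in Set.Icc a b, ‖deriv f r‖ₑ ^ 2 := by
        have hf' := (hf.continuous_deriv le_rfl).aestronglyMeasurable
          (μ := volume.restrict (Set.Icc a b))
        simpa using sq_lintegral_le (volume.restrict (Set.Icc a b)) hf'.enorm

section Coordinates

variable [DecidableEq ι] [Fintype ι]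

lemma enorm_sub_update_sq_le [NormedSpace ℝ E] {z : (ι → ℝ) → E} (hz : ContDiff ℝ 1 z) (k : ι)
    {a b : ℝ} {x : ι → ℝ} (hx : x k ∈ Set.Icc a b) {t : ℝ} (ht : t ∈ Set.Icc a b) :
    ‖z x - z (update x k t)‖ₑ ^ 2 ≤ ENNReal.ofReal (b - a) *
      ∫⁻ r in Set.Icc a b, ‖fderiv ℝ z (update x k r) (Pi.single k 1)‖ₑ ^ 2 := by
  have deriv_line (r : ℝ) : deriv (z ∘ update x k) r =
      fderiv ℝ z (update x k r) (Pi.single k 1) :=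
    ((hz.differentiable one_ne_zero _).hasFDerivAt.comp_hasDerivAt r
      (hasDerivAt_update x k r)).deriv
  simpa only [comp_apply, update_eq_self, deriv_line] using
    enorm_sub_sq_le_lintegral_deriv (hz.comp (contDiff_update 1 x k)) hx ht

/- The chain `∅ ⊂ {i} ⊂ ⋯ ⊂ univ` adds `k` to `s k`. It starts with `i`, so that
`(insert k (s k)).piecewise y x` never depends on `x i`. -/
lemma exists_sum_insert_sub_eq {G : Type*} [AddCommGroup G] (i : ι) :
    ∃ s : ι → Finset ι, (∀ k, i ∈ insert k (s k)) ∧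
      ∀ F : Finset ι → G, ∑ k, (F (s k) - F (insert k (s k))) = F ∅ - F univ := by
  suffices ∀ t : Finset ι, i ∉ t → ∃ s : ι → Finset ι, (∀ k, i ∈ insert k (s k)) ∧
      ∀ F : Finset ι → G, ∑ k ∈ insert i t, (F (s k) - F (insert k (s k))) =
        F ∅ - F (insert i t) by
    simpa using this (univ.erase i) (notMem_erase i univ)
  intro t
  induction t using Finset.induction_on with
  | empty => exact fun _ => ⟨fun k => ({i} : Finset ι).erase k, by grind, by simp⟩
  | insert j t hj ih =>
    intro hi
    obtain ⟨s, his, hs⟩ := ih (by grind)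
    refine ⟨update s j (insert i t), by grind, fun F => ?_⟩
    have hj' : j ∉ insert i t := by grind
    rw [insert_comm, sum_insert hj', update_self,
      sum_congr rfl fun k hk => by rw [update_of_ne (ne_of_mem_of_not_mem hk hj')], hs]
    abel

variable [MeasurableSpace α] (μ : ι → Measure α) [∀ i, SigmaFinite (μ i)]

lemma lintegral_lintegral_update (k : ι) {g : (ι → α) → ℝ≥0∞} (hg : Measurable g) :
    ∫⁻ x, ∫⁻ t, g (update x k t) ∂μ k ∂Measure.pi μ =
      μ k Set.univ * ∫⁻ x, g x ∂Measure.pi μ := by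
  rw [← lintegral_const_mul _ hg]
  simp_rw [← lmarginal_singleton g k (μ := μ)]
  refine lintegral_eq_of_lmarginal_eq {k} (hg.lmarginal μ) (hg.const_mul _) ?_
  ext x
  simp only [lmarginal_singleton, update_idem, lintegral_const]
  have hgx : Measurable fun t => g (update x k t) := hg.comp (measurable_update x)
  rw [lintegral_const_mul _ hgx, mul_comm]

lemma measurePreserving_piecewise_swap (s : Finset ι) :
    MeasurePreserving (fun p : (ι → α) × (ι → α) => (s.piecewise p.2 p.1, s.piecewise p.1 p.2))
      ((Measure.pi μ).prod (Measure.pi μ)) ((Measure.pi μ).prod (Measure.pi μ)) := by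
  have swap_coord (i : ι) : MeasurePreserving (fun q : α × α => if i ∈ s then q.swap else q)
      ((μ i).prod (μ i)) ((μ i).prod (μ i)) := by
    by_cases hi : i ∈ s
    · simpa only [hi, if_true] using Measure.measurePreserving_swap
    · simp only [hi, if_false]
      exact MeasurePreserving.id _
  have unzip := measurePreserving_arrowProdEquivProdArrow α α ι μ μ
  convert unzip.comp ((measurePreserving_pi _ _ swap_coord).comp (unzip.symm _)) using 1
  funext p
  ext i <;> by_cases hi : i ∈ s <;>
    simp [hi, MeasurableEquiv.arrowProdEquivProdArrow, Equiv.arrowProdEquivProdArrow]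

lemma lintegral_prod_piecewise_mul {s : Finset ι} {f g : (ι → α) → ℝ≥0∞}
    (hf : Measurable f) (hg : Measurable g) :
    ∫⁻ p, f (s.piecewise p.1 p.2) * g (s.piecewise p.2 p.1) ∂(Measure.pi μ).prod (Measure.pi μ) =
      (∫⁻ x, f x ∂Measure.pi μ) * ∫⁻ x, g x ∂Measure.pi μ := by
  rw [mul_comm (∫⁻ x, f x ∂_), ← lintegral_prod_mul hg.aemeasurable hf.aemeasurable]
  simp_rw [mul_comm (f _)]
  exact (measurePreserving_piecewise_swap μ s).lintegral_comp
    ((hg.comp measurable_fst).mul (hf.comp measurable_snd))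

lemma lintegral_prod_mul_enorm_sub_sq_le (i : ι) {φ : α → ℝ≥0∞} (hφ : Measurable φ)
    {z : (ι → α) → E} {D : ι → (ι → α) → ℝ≥0∞} (hD : ∀ k, Measurable (D k))
    (hzD : ∀ᵐ p ∂(Measure.pi μ).prod (Measure.pi μ), ∀ (s : Finset ι) (k : ι),
      ‖z (s.piecewise p.2 p.1) - z ((insert k s).piecewise p.2 p.1)‖ₑ ^ 2 ≤
        D k ((insert k s).piecewise p.2 p.1)) :
    ∫⁻ p, φ (p.1 i) * ‖z p.1 - z p.2‖ₑ ^ 2 ∂(Measure.pi μ).prod (Measure.pi μ) ≤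
      Fintype.card ι * ((∫⁻ x, φ (x i) ∂Measure.pi μ) * ∑ k, ∫⁻ x, D k x ∂Measure.pi μ) := by
  obtain ⟨s, his, hs⟩ := exists_sum_insert_sub_eq (G := E) i
  have hφi : Measurable fun x : ι → α => φ (x i) := hφ.comp (measurable_pi_apply i)
  have meas_piecewise (k : ι) : Measurable fun p : (ι → α) × (ι → α) =>
      (insert k (s k)).piecewise p.2 p.1 :=
    measurable_fst.comp (measurePreserving_piecewise_swap μ _).measurable
  have meas_summand (k : ι) : Measurable fun p : (ι → α) × (ι → α) =>
      φ (p.1 i) * D k ((insert k (s k)).piecewise p.2 p.1) :=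
    (hφi.comp measurable_fst).mul ((hD k).comp (meas_piecewise k))
  calc ∫⁻ p, φ (p.1 i) * ‖z p.1 - z p.2‖ₑ ^ 2 ∂(Measure.pi μ).prod (Measure.pi μ)
      ≤ ∫⁻ p, Fintype.card ι * ∑ k, φ (p.1 i) * D k ((insert k (s k)).piecewise p.2 p.1)
          ∂(Measure.pi μ).prod (Measure.pi μ) := by
        refine lintegral_mono_ae (hzD.mono fun p hp => ?_)
        have telescope := hs fun r => z (r.piecewise p.2 p.1)
        rw [piecewise_empty, piecewise_univ] at telescope
        rw [← telescope, ← Finset.mul_sum, mul_left_comm, ← card_univ]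
        gcongr
        refine (enorm_sum_sq_le_card_mul_sum univ _).trans ?_
        gcongr with k
        exact hp (s k) k
    _ = Fintype.card ι * ∑ k, ∫⁻ p, φ (p.1 i) * D k ((insert k (s k)).piecewise p.2 p.1)
          ∂(Measure.pi μ).prod (Measure.pi μ) := by
        rw [lintegral_const_mul _ (Finset.measurable_fun_sum _ fun k _ => meas_summand k),
          lintegral_finsetSum _ fun k _ => meas_summand k]
    _ = _ := by
        congr 1
        rw [Finset.mul_sum]
        refine sum_congr rfl fun k _ => ?_
        rw [← lintegral_prod_piecewise_mul μ (s := insert k (s k)) hφi (hD k)]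
        simp only [piecewise_eq_of_mem _ _ _ (his k)]

end Coordinates

lemma measure_univ_mul_lintegral_eval [Fintype ι] [MeasurableSpace α] (μ : ι → Measure α)
    [∀ i, SigmaFinite (μ i)] (i : ι) {φ : α → ℝ≥0∞} (hφ : Measurable φ) :
    μ i Set.univ * ∫⁻ x, φ (x i) ∂Measure.pi μ = Measure.pi μ Set.univ * ∫⁻ t, φ t ∂μ i := by
  classical
  have hφi : Measurable fun x : ι → α => φ (x i) := hφ.comp (measurable_pi_apply i)
  rw [← lintegral_lintegral_update μ i hφi]
  simp only [update_self, lintegral_const, mul_comm]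

section Box

variable [Fintype ι] {l u : ι → ℝ}

lemma pi_restrict_Icc (l u : ι → ℝ) :
    Measure.pi (fun k => volume.restrict (Set.Icc (l k) (u k))) =
      volume.restrict (Set.Icc l u) := by
  rw [← Measure.restrict_pi_pi, Set.pi_univ_Icc, volume_pi]

variable [DecidableEq ι] [NormedSpace ℝ E] {z : (ι → ℝ) → E}

lemma lintegral_Icc_prod_mul_enorm_sub_sq_le (hz : ContDiff ℝ 1 z) (i : ι) {φ : ℝ → ℝ≥0∞}
    (hφ : Measurable φ) :
    ∫⁻ p, φ (p.1 i) * ‖z p.1 - z p.2‖ₑ ^ 2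
        ∂(volume.restrict (Set.Icc l u)).prod (volume.restrict (Set.Icc l u)) ≤
      Fintype.card ι * ((∫⁻ x in Set.Icc l u, φ (x i)) * ∑ k, ENNReal.ofReal (u k - l k) ^ 2 *
        ∫⁻ x in Set.Icc l u, ‖fderiv ℝ z x (Pi.single k 1)‖ₑ ^ 2) := by
  set μ : ι → Measure ℝ := fun k => volume.restrict (Set.Icc (l k) (u k)) with hμ
  have hμ_pi : Measure.pi μ = volume.restrict (Set.Icc l u) := pi_restrict_Icc l u
  let g (k : ι) (x : ι → ℝ) : ℝ≥0∞ := ‖fderiv ℝ z x (Pi.single k 1)‖ₑ ^ 2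
  let D (k : ι) (x : ι → ℝ) : ℝ≥0∞ := ENNReal.ofReal (u k - l k) * ∫⁻ t, g k (update x k t) ∂μ k
  have hg (k : ι) : Measurable (g k) :=
    ((hz.continuous_fderiv one_ne_zero).clm_apply continuous_const).enorm.measurable.pow_const 2
  have hgD (k : ι) : Measurable fun x => ∫⁻ t, g k (update x k t) ∂μ k := by
    simpa only [lmarginal_singleton] using (hg k).lmarginal μ (s := {k})
  have lintegral_D (k : ι) : ∫⁻ x, D k x ∂Measure.pi μ =
      ENNReal.ofReal (u k - l k) ^ 2 * ∫⁻ x, g k x ∂Measure.pi μ := by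
    rw [lintegral_const_mul _ (hgD k), lintegral_lintegral_update μ k (hg k), hμ,
      Measure.restrict_apply_univ, Real.volume_Icc, sq, mul_assoc]
  have mem_box : ∀ᵐ p ∂(Measure.pi μ).prod (Measure.pi μ),
      p ∈ Set.Icc l u ×ˢ Set.Icc l u := by
    rw [hμ_pi, Measure.prod_restrict]
    exact ae_restrict_mem (measurableSet_Icc.prod measurableSet_Icc)
  simp_rw [← hμ_pi]
  change _ ≤ Fintype.card ι * (_ * ∑ k, ENNReal.ofReal (u k - l k) ^ 2 *
    ∫⁻ x, g k x ∂Measure.pi μ)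
  simp_rw [← lintegral_D]
  refine lintegral_prod_mul_enorm_sub_sq_le μ i hφ (fun k => (hgD k).const_mul _)
    (mem_box.mono fun p hp s k => ?_)
  have hx : s.piecewise p.2 p.1 ∈ Set.Icc l u := by
    rw [← Set.pi_univ_Icc] at hp ⊢
    exact s.piecewise_mem_set_pi hp.2 hp.1
  rw [piecewise_insert]
  simpa only [D, update_idem] using enorm_sub_update_sq_le hz k ⟨hx.1 k, hx.2 k⟩
    ⟨hp.2.1 k, hp.2.2 k⟩

theorem lintegral_Icc_mul_enorm_sq_le [CompleteSpace E] (hz : ContDiff ℝ 1 z)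
    (hz₀ : ∫ x in Set.Icc l u, z x = 0) (i : ι) {φ : ℝ → ℝ≥0∞} (hφ : Measurable φ) :
    ENNReal.ofReal (u i - l i) * ∫⁻ x in Set.Icc l u, φ (x i) * ‖z x‖ₑ ^ 2 ≤
      Fintype.card ι * ((∫⁻ t in Set.Icc (l i) (u i), φ t) *
        ∑ k, ENNReal.ofReal (u k - l k) ^ 2 *
          ∫⁻ x in Set.Icc l u, ‖fderiv ℝ z x (Pi.single k 1)‖ₑ ^ 2) := by
  set M : Measure (ι → ℝ) := volume.restrict (Set.Icc l u) with hM
  set S := ∑ k, ENNReal.ofReal (u k - l k) ^ 2 * ∫⁻ x, ‖fderiv ℝ z x (Pi.single k 1)‖ₑ ^ 2 ∂M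
  have : IsFiniteMeasure M := isFiniteMeasure_restrict.2 isCompact_Icc.measure_ne_top
  rcases eq_or_ne (M Set.univ) 0 with hM₀ | hM₀
  · simp [Measure.measure_univ_eq_zero.1 hM₀]
  have hφi : Measurable fun x : ι → ℝ => φ (x i) := hφ.comp (measurable_pi_apply i)
  have weight : ENNReal.ofReal (u i - l i) * ∫⁻ x, φ (x i) ∂M =
      M Set.univ * ∫⁻ t in Set.Icc (l i) (u i), φ t := by
    simpa [pi_restrict_Icc, hM] using
      measure_univ_mul_lintegral_eval (fun k => volume.restrict (Set.Icc (l k) (u k))) i hφ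
  have doubling : M Set.univ * ∫⁻ x, φ (x i) * ‖z x‖ₑ ^ 2 ∂M ≤
      ∫⁻ p, φ (p.1 i) * ‖z p.1 - z p.2‖ₑ ^ 2 ∂M.prod M :=
    have hz_int : Integrable z M := hz.continuous.integrableOn_Icc
    measure_univ_mul_lintegral_mul_enorm_sq_le hφi.aemeasurable hz_int hz₀
  refine (ENNReal.mul_le_mul_iff_right hM₀ (measure_ne_top M _)).1 ?_
  calc M Set.univ * (ENNReal.ofReal (u i - l i) * ∫⁻ x, φ (x i) * ‖z x‖ₑ ^ 2 ∂M)
      = ENNReal.ofReal (u i - l i) * (M Set.univ * ∫⁻ x, φ (x i) * ‖z x‖ₑ ^ 2 ∂M) := by ring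
    _ ≤ ENNReal.ofReal (u i - l i) * (Fintype.card ι * ((∫⁻ x, φ (x i) ∂M) * S)) := by
        grw [doubling, lintegral_Icc_prod_mul_enorm_sub_sq_le hz i hφ]
    _ = Fintype.card ι * ((ENNReal.ofReal (u i - l i) * ∫⁻ x, φ (x i) ∂M) * S) := by ring
    _ = M Set.univ * (Fintype.card ι * ((∫⁻ t in Set.Icc (l i) (u i), φ t) * S)) := by
        rw [weight]
        ring

lemma lintegral_Icc_inter_slab_enorm_sq_le [CompleteSpace E] (hz : ContDiff ℝ 1 z)
    (hz₀ : ∫ x in Set.Icc l u, z x = 0) (i : ι) {A : Set ℝ} (hA : MeasurableSet A) :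
    ENNReal.ofReal (u i - l i) * ∫⁻ x in eval i ⁻¹' A ∩ Set.Icc l u, ‖z x‖ₑ ^ 2 ≤
      Fintype.card ι * (volume (A ∩ Set.Icc (l i) (u i)) *
        ∑ k, ENNReal.ofReal (u k - l k) ^ 2 *
          ∫⁻ x in Set.Icc l u, ‖fderiv ℝ z x (Pi.single k 1)‖ₑ ^ 2) := by
  have hA' : MeasurableSet (eval i ⁻¹' A : Set (ι → ℝ)) := measurable_pi_apply i hA
  have weighted := lintegral_Icc_mul_enorm_sq_le hz hz₀ i (measurable_one.indicator hA)
  rw [lintegral_indicator_one hA, Measure.restrict_apply hA] at weighted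
  refine le_of_eq_of_le ?_ weighted
  rw [← Measure.restrict_restrict hA', ← lintegral_indicator hA']
  congr 1
  refine lintegral_congr fun x => ?_
  by_cases hx : x i ∈ A <;> simp [hx]

end Box

section Cube

variable {d : ℕ} {x₀ : Fin d → ℝ} {δ ε r : ℝ}

lemma cube_eq_Icc (d : ℕ) (x₀ : Fin d → ℝ) (r : ℝ) :
    cube d x₀ r = Set.Icc (fun i => x₀ i - r / 2) (fun i => x₀ i + r / 2) := by
  ext x
  simp only [cube, Set.mem_ofPred_eq, abs_sub_le_iff, Set.mem_Icc, Pi.le_def, ← forall_and]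
  exact forall_congr' fun i => by constructor <;> rintro ⟨h₁, h₂⟩ <;> constructor <;> linarith

lemma isCompact_cube : IsCompact (cube d x₀ r) := cube_eq_Icc d x₀ r ▸ isCompact_Icc

lemma volume_lt_abs_sub_inter_Icc_le (c δ ε : ℝ) :
    volume ({t : ℝ | (δ - ε) / 2 < |t - c|} ∩ Set.Icc (c - δ / 2) (c + δ / 2)) ≤
      ENNReal.ofReal ε := by
  have cover : {t : ℝ | (δ - ε) / 2 < |t - c|} ∩ Set.Icc (c - δ / 2) (c + δ / 2) ⊆
      Set.Icc (c - δ / 2) (c - (δ - ε) / 2) ∪ Set.Icc (c + (δ - ε) / 2) (c + δ / 2) := by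
    rintro t ⟨ht, hl, hu⟩
    rcases lt_abs.1 (Set.mem_ofPred.1 ht) with h | h
    · exact .inr ⟨by linarith, hu⟩
    · exact .inl ⟨hl, by linarith⟩
  calc _ ≤ ENNReal.ofReal (ε / 2) + ENNReal.ofReal (ε / 2) := by
        refine (measure_mono cover).trans ((measure_union_le _ _).trans_eq ?_)
        simp only [Real.volume_Icc]
        ring_nf
    _ = ENNReal.ofReal ε := by
        rw [← two_mul, ← ENNReal.ofReal_ofNat 2, ← ENNReal.ofReal_mul zero_le_two,
          mul_div_cancel₀ ε two_ne_zero]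

lemma cube_diff_cube_subset_iUnion :
    cube d x₀ δ \ cube d x₀ (δ - ε) ⊆
      ⋃ i, eval i ⁻¹' {t | (δ - ε) / 2 < |t - x₀ i|} ∩ cube d x₀ δ := by
  rintro x ⟨hx, hx'⟩
  obtain ⟨i, hi⟩ := not_forall.1 hx'
  exact Set.mem_iUnion.2 ⟨i, not_le.1 hi, hx⟩

variable [NormedSpace ℝ E] [CompleteSpace E] {z : (Fin d → ℝ) → E}

lemma lintegral_cube_inter_slab_enorm_sq_le (hδ : 0 < δ) (hz : ContDiff ℝ 1 z)
    (hz₀ : ∫ x in cube d x₀ δ, z x = 0) (i : Fin d) :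
    ∫⁻ x in eval i ⁻¹' {t | (δ - ε) / 2 < |t - x₀ i|} ∩ cube d x₀ δ, ‖z x‖ₑ ^ 2 ≤
      d * ENNReal.ofReal ε * ENNReal.ofReal δ *
        ∑ k, ∫⁻ x in cube d x₀ δ, ‖fderiv ℝ z x (Pi.single k 1)‖ₑ ^ 2 := by
  have hA : MeasurableSet {t : ℝ | (δ - ε) / 2 < |t - x₀ i|} :=
    measurableSet_lt (by fun_prop) (by fun_prop)
  rw [cube_eq_Icc] at hz₀ ⊢
  have slab := lintegral_Icc_inter_slab_enorm_sq_le hz hz₀ i hA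
  simp only [add_sub_sub_cancel, add_halves, Fintype.card_fin, ← Finset.mul_sum] at slab
  grw [volume_lt_abs_sub_inter_Icc_le] at slab
  refine (ENNReal.mul_le_mul_iff_right (ENNReal.ofReal_pos.2 hδ).ne'
    ENNReal.ofReal_ne_top).1 (slab.trans_eq ?_)
  ring

theorem lintegral_cube_diff_cube_enorm_sq_le (hδ : 0 < δ) (hz : ContDiff ℝ 1 z)
    (hz₀ : ∫ x in cube d x₀ δ, z x = 0) :
    ∫⁻ x in cube d x₀ δ \ cube d x₀ (δ - ε), ‖z x‖ₑ ^ 2 ≤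
      d ^ 2 * ENNReal.ofReal ε * ENNReal.ofReal δ *
        ∑ k, ∫⁻ x in cube d x₀ δ, ‖fderiv ℝ z x (Pi.single k 1)‖ₑ ^ 2 := by
  grw [cube_diff_cube_subset_iUnion, lintegral_iUnion_le, tsum_fintype,
    Finset.sum_le_sum fun i _ => lintegral_cube_inter_slab_enorm_sq_le hδ hz hz₀ i]
  simp only [Finset.sum_const, card_univ, Fintype.card_fin, nsmul_eq_mul]
  exact le_of_eq (by ring)

lemma integral_cube_diff_cube_norm_sq_le (hε : 0 ≤ ε) (hδ : 0 < δ) (hz : ContDiff ℝ 1 z)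
    (hz₀ : ∫ x in cube d x₀ δ, z x = 0) :
    ∫ x in cube d x₀ δ \ cube d x₀ (δ - ε), ‖z x‖ ^ 2 ≤
      d ^ 2 * ε * δ * ∫ x in cube d x₀ δ, ∑ i, ‖fderiv ℝ z x (Pi.single i 1)‖ ^ 2 := by
  have hz_int : IntegrableOn (fun x => ‖z x‖ ^ 2) (cube d x₀ δ \ cube d x₀ (δ - ε)) :=
    ((hz.continuous.norm.pow 2).continuousOn.integrableOn_compact isCompact_cube).mono_set
      Set.sdiff_subset
  have hdz_int (i : Fin d) :
      IntegrableOn (fun x => ‖fderiv ℝ z x (Pi.single i 1)‖ ^ 2) (cube d x₀ δ) :=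
    (((hz.continuous_fderiv one_ne_zero).clm_apply
      continuous_const).norm.pow 2).continuousOn.integrableOn_compact isCompact_cube
  have lintegral_le := lintegral_cube_diff_cube_enorm_sq_le (ε := ε) hδ hz hz₀
  simp_rw [← ofReal_integral_norm_sq hz_int, ← ofReal_integral_norm_sq (hdz_int _)] at lintegral_le
  rw [integral_finsetSum _ fun i _ => hdz_int i]
  refine (ENNReal.ofReal_le_ofReal_iff (by positivity)).1 (lintegral_le.trans_eq ?_)
  rw [ENNReal.ofReal_mul (by positivity), ENNReal.ofReal_mul (by positivity),
    ENNReal.ofReal_mul (by positivity), ENNReal.ofReal_pow (by positivity), ENNReal.ofReal_natCast,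
    ENNReal.ofReal_sum_of_nonneg fun i _ => by positivity]

end Cube

lemma exists_contDiff_eventuallyEq {V : Type*} [NormedAddCommGroup V] [NormedSpace ℝ V]
    [FiniteDimensional ℝ V] [NormedSpace ℝ E] {n : ℕ∞} {K U : Set V} {z : V → E} (hK : IsClosed K)
    (hU : IsOpen U) (hKU : K ⊆ U) (hz : ContDiffOn ℝ n z U) :
    ∃ w : V → E, ContDiff ℝ n w ∧ ∀ x ∈ K, w =ᶠ[𝓝 x] z := by
  obtain ⟨χ, hχ₀, hχ₁, -⟩ := exists_contMDiffMap_zero_one_nhds_of_isClosed (n := n) 𝓘(ℝ, V)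
    hU.isClosed_compl hK (Set.disjoint_compl_left_iff_subset.2 hKU)
  rw [Filter.Eventually, mem_nhdsSet_iff_forall] at hχ₀ hχ₁
  refine ⟨fun x => χ x • z x, contDiff_iff_contDiffAt.2 fun x => ?_, fun x hx => ?_⟩
  · by_cases hx : x ∈ U
    · exact χ.contMDiff.contDiff.contDiffAt.smul (hz.contDiffAt (hU.mem_nhds hx))
    · refine (contDiffAt_const (c := (0 : E))).congr_of_eventuallyEq ?_
      filter_upwards [hχ₀ x hx] with y hy
      rw [Set.mem_ofPred.1 hy, zero_smul]
  · filter_upwards [hχ₁ x hx] with y hy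
    rw [Set.mem_ofPred.1 hy, one_smul]

theorem boundary_strip_trace_inequality_general [NormedSpace ℝ E] [CompleteSpace E] {d : ℕ}
    {ε δ : ℝ} (hε : 0 ≤ ε) (hδ : 0 < δ) {x₀ : Fin d → ℝ} {z : (Fin d → ℝ) → E}
    (hz : ∃ U : Set (Fin d → ℝ), IsOpen U ∧ cube d x₀ δ ⊆ U ∧ ContDiffOn ℝ 1 z U)
    (hz₀ : ∫ x in cube d x₀ δ, z x = 0) :
    ∫ x in cube d x₀ δ \ cube d x₀ (δ - ε), ‖z x‖ ^ 2 ≤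
      d ^ 2 * ε * δ * ∫ x in cube d x₀ δ, ∑ i, ‖fderiv ℝ z x (Pi.single i 1)‖ ^ 2 := by
  obtain ⟨U, hU, hQU, hzU⟩ := hz
  obtain ⟨w, hw, hwz⟩ := exists_contDiff_eventuallyEq isCompact_cube.isClosed hU hQU hzU
  have hQ (r : ℝ) : MeasurableSet (cube d x₀ r) := isCompact_cube.measurableSet
  have hw₀ : ∫ x in cube d x₀ δ, w x = 0 := by
    rw [← hz₀]
    exact setIntegral_congr_fun (hQ δ) fun x hx => (hwz x hx).eq_of_nhds
  convert integral_cube_diff_cube_norm_sq_le hε hδ hw hw₀ using 1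
  · refine setIntegral_congr_fun ((hQ δ).diff (hQ _)) fun x hx => ?_
    simp only [(hwz x hx.1).eq_of_nhds]
  · congr 1
    refine setIntegral_congr_fun (hQ δ) fun x hx => ?_
    simp only [(hwz x hx).fderiv_eq]

/-- Scaled boundary-strip trace inequality for mean-zero `H¹` functions on a cube. -/
theorem boundary_strip_trace_inequality
    (d : ℕ) (hd : 1 ≤ d) :
    ∃ C : ℝ, 0 < C ∧ ∀ (ε δ : ℝ), 0 < ε → ε ≤ δ → ∀ (x₀ : Fin d → ℝ)
      (z : (Fin d → ℝ) → ℝ),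
      (∃ U : Set (Fin d → ℝ), IsOpen U ∧ cube d x₀ δ ⊆ U ∧ ContDiffOn ℝ 1 z U) →
      (∫ x in cube d x₀ δ, z x) = 0 →
      (∫ x in cube d x₀ δ \ cube d x₀ (δ - ε), z x ^ 2)
        ≤ C * ε * δ * ∫ x in cube d x₀ δ, ∑ i, grad d z x i ^ 2 := by
  refine ⟨d ^ 2, by positivity, fun ε δ hε hεδ x₀ z hz hz₀ => ?_⟩
  simpa only [grad, Real.norm_eq_abs, sq_abs] using
    boundary_strip_trace_inequality_general hε.le (hε.trans_le hεδ) hz hz₀
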